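/- If a vector θ ∈ C^N has at most K nonzero entries (K-sparse) and A ∈ C^{M×N} is a matrix such that every 2K columns of A are linearly independent, then θ is the unique K-sparse solution of Aθ = y for y = Aθ: any other θ' with at most K nonzero entries and Aθ' = y satisfies θ' = θ. -/

import Mathlib

open Matrix

/-- If every family of at most `2K` columns of `A` is linearly independent,
then a `K`-sparse vector `θ` is the unique `K`-sparse solution of `A θ' = A θ`. -/
theorem sparse_unique_solution (M N K : ℕ) (A : Matrix (Fin M) (Fin N) ℂ)
    (hA : ∀ T : Finset (Fin N), T.card ≤ 2 * K →
      LinearIndependent ℂ (fun t : T => Aᵀ (t : Fin N)))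
    (θ : Fin N → ℂ) (hθ : (Finset.univ.filter fun i => θ i ≠ 0).card ≤ K)
    (θ' : Fin N → ℂ) (hθ' : (Finset.univ.filter fun i => θ' i ≠ 0).card ≤ K)
    (hsol : A.mulVec θ' = A.mulVec θ) :
    θ' = θ := by
  classical
  set T := (Finset.univ.filter fun i => θ i ≠ 0) ∪ (Finset.univ.filter fun i => θ' i ≠ 0) with hT
  have hcard : T.card ≤ 2 * K := (Finset.card_union_le _ _).trans (by omega)
  have hzero : ∀ i ∉ T, θ' i - θ i = 0 := by
    intro i hi
    simp only [hT, Finset.mem_union, Finset.mem_filter, Finset.mem_univ, true_and, not_or,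
      not_not] at hi
    simp [hi.1, hi.2]
  have hsum : ∑ t : T, (θ' t - θ t) • Aᵀ (t : Fin N) = 0 := by
    rw [Finset.sum_coe_sort T fun i => (θ' i - θ i) • Aᵀ i,
      Finset.sum_subset (Finset.subset_univ T) fun i _ hi => by rw [hzero i hi, zero_smul]]
    have hdiff : A.mulVec (θ' - θ) = 0 := by rw [Matrix.mulVec_sub, hsol, sub_self]
    rw [Matrix.mulVec_eq_sum] at hdiff
    simpa only [op_smul_eq_smul, Pi.sub_apply] using hdiff
  have hcoeff := Fintype.linearIndependent_iff.mp (hA T hcard) (fun t => θ' t - θ t) hsum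
  funext i
  by_cases hi : i ∈ T
  · exact sub_eq_zero.mp (hcoeff ⟨i, hi⟩)
  · exact sub_eq_zero.mp (hzero i hi)
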